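/- arXiv:2002.07528 — 3 statements merged into one kernel-verified Lean document; each statement's English description precedes it below -/
import Mathlib

section
/- (Theorem 1, universal approximation, Pinkus.) Let σ : ℝ → ℝ be a continuous activation function that is not a polynomial, let d ≥ 1, and let K ⊂ ℝ^d be compact. Then for every continuous function f : K → ℝ and every ε > 0 there exist N ∈ ℕ and real coefficients c_i, h_i and vectors w_i ∈ ℝ^d (i = 1,…,N) such that sup_{x ∈ K} | f(x) − ∑_{i=1}^{N} c_i σ(⟨w_i, x⟩ + h_i) | < ε. -/
namespace PinkusUA

open MeasureTheory Filter Topology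

/-- The linear function with direction `w`. -/
noncomputable def lin {d : ℕ} (K : Set (Fin d → ℝ)) (w : Fin d → ℝ) : C(K, ℝ) :=
  ⟨fun x => ∑ j : Fin d, w j * x.1 j,
    continuous_finsetSum _ fun j _ =>
      continuous_const.mul ((continuous_apply j).comp continuous_subtype_val)⟩

/-- The ridge function attached to `g`, direction `w` and shift `h`. -/
noncomputable def ridge {d : ℕ} (K : Set (Fin d → ℝ)) (g : ℝ → ℝ) (hg : Continuous g)
    (w : Fin d → ℝ) (h : ℝ) : C(K, ℝ) :=
  ⟨fun x => g ((∑ j : Fin d, w j * x.1 j) + h),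
    hg.comp ((lin K w).continuous.add continuous_const)⟩

/-- A smooth function whose `k`-th derivative vanishes is a polynomial. -/
lemma poly_of_iteratedDeriv (k : ℕ) : ∀ (f : ℝ → ℝ), ContDiff ℝ (⊤ : ℕ∞) f →
    (∀ t, iteratedDeriv k f t = 0) →
    ∃ a : ℕ → ℝ, ∀ t, f t = ∑ i ∈ Finset.range k, a i * t ^ i := by
  induction k with
  | zero => intro f _ h; exact ⟨0, by simpa using h⟩
  | succ k ih =>
    intro f hf h
    have hf' : ContDiff ℝ (⊤ : ℕ∞) (deriv f) := by
      exact (contDiff_infty_iff_deriv.1 hf).2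
    obtain ⟨a, ha⟩ := ih (deriv f) hf' (fun t => by rw [← iteratedDeriv_succ']; exact h t)
    have hd : Differentiable ℝ f := hf.differentiable (by simp)
    let q : ℝ → ℝ := fun t => ∑ i ∈ Finset.range k, a i / (i + 1) * t ^ (i + 1)
    have hq : ∀ t, HasDerivAt q (deriv f t) t := by
      intro t
      rw [ha t]
      refine HasDerivAt.fun_sum fun i _ => ?_
      have := (hasDerivAt_pow (i + 1) t).const_mul (a i / (i + 1))
      refine this.congr_deriv ?_
      have : (i : ℝ) + 1 ≠ 0 := by positivity
      push_cast
      field_simp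
      try simp
    have hc : ∀ t, f t - q t = f 0 - q 0 := by
      intro t
      refine is_const_of_deriv_eq_zero (f := fun t => f t - q t)
        (fun t => (hd t).sub (hq t).differentiableAt) (fun t => ?_) t 0
      have := (hd t).hasDerivAt.sub (hq t)
      have h2 := this.deriv
      rw [sub_self] at h2
      exact h2
    refine ⟨fun i => if i = 0 then f 0 else a (i - 1) / i, fun t => ?_⟩
    rw [Finset.sum_range_succ']
    have h0 : q 0 = 0 := by simp [q]
    have := hc t
    rw [h0] at this
    simp only [Nat.add_eq_zero_iff, one_ne_zero, and_false, if_false, Nat.add_sub_cancel, if_true,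
      pow_zero, mul_one, Nat.cast_add, Nat.cast_one]
    change f t = q t + f 0
    linarith

/-- A pointwise limit of polynomials of degree `< k` is a polynomial. -/
lemma poly_of_limit (k : ℕ) (σ : ℝ → ℝ) (F : ℕ → ℝ → ℝ)
    (hF : ∀ n, ∃ a : ℕ → ℝ, ∀ t, F n t = ∑ i ∈ Finset.range k, a i * t ^ i)
    (hlim : ∀ t, Tendsto (fun n => F n t) atTop (𝓝 (σ t))) :
    ∃ p : Polynomial ℝ, ∀ t, σ t = p.eval t := by
  let v : ℕ → ℝ := fun i => i
  have hv : Set.InjOn v (Finset.range k) := Nat.cast_injective.injOn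
  refine ⟨Lagrange.interpolate (Finset.range k) v (fun i => σ (v i)), fun t => ?_⟩
  refine tendsto_nhds_unique (hlim t) ?_
  have hE : ∀ n, F n t = ∑ i ∈ Finset.range k,
      F n (v i) * (Lagrange.basis (Finset.range k) v i).eval t := by
    intro n
    obtain ⟨a, ha⟩ := hF n
    let P : Polynomial ℝ := ∑ i ∈ Finset.range k, Polynomial.C (a i) * Polynomial.X ^ i
    have hP : ∀ s, P.eval s = F n s := by
      intro s; simp [P, ha, Polynomial.eval_finsetSum]
    have hdeg : P.degree < (Finset.range k).card := by
      rw [Finset.card_range]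
      refine (Polynomial.degree_sum_le _ _).trans_lt ?_
      rw [Finset.sup_lt_iff (by exact WithBot.bot_lt_coe _)]
      intro i hi
      refine (Polynomial.degree_C_mul_X_pow_le _ _).trans_lt ?_
      exact_mod_cast Finset.mem_range.1 hi
    have := congrArg (Polynomial.eval t) (Lagrange.eq_interpolate (v := v) hv hdeg)
    rw [hP] at this
    rw [this]
    simp [Lagrange.interpolate_apply, Polynomial.eval_finsetSum, hP]
  simp_rw [hE]
  simp only [Lagrange.interpolate_apply, Polynomial.eval_finsetSum, Polynomial.eval_mul,
    Polynomial.eval_C]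
  exact tendsto_finsetSum _ fun i _ => (hlim _).mul_const _

/-- Mollification stays in a closed subspace. -/
lemma conv_mem {d : ℕ} (K : Set (Fin d → ℝ)) [CompactSpace K] (σ : ℝ → ℝ) (hσ : Continuous σ)
    (W : Submodule ℝ C(K, ℝ)) (hW : IsClosed (W : Set C(K, ℝ)))
    (h : ∀ w h, ridge K σ hσ w h ∈ W)
    (φ : ℝ → ℝ) (hφ : Continuous φ) (hφs : HasCompactSupport φ)
    (τ : ℝ → ℝ) (hτ : Continuous τ) (hτe : ∀ y, τ y = ∫ s, φ s * σ (y - s))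
    (w : Fin d → ℝ) (b : ℝ) : ridge K τ hτ w b ∈ W := by
  have : CompleteSpace W := hW.completeSpace_coe
  let g : C(ℝ × K, ℝ) := ⟨fun p => σ (lin K w p.2 + (b - p.1)), by fun_prop⟩
  have hgm : ∀ s, g.curry s ∈ W := fun s => h w (b - s)
  let G : ℝ → W := fun s => φ s • ⟨g.curry s, hgm s⟩
  have hG : Continuous G := hφ.smul (g.curry.continuous.subtype_mk hgm)
  have hGs : HasCompactSupport G := hφs.smul_right
  have hGi : Integrable G := hG.integrable_of_hasCompactSupport hGs
  have key : ridge K τ hτ w b = ((∫ s, G s : W) : C(K, ℝ)) := by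
    ext x
    let E : W →L[ℝ] ℝ := (ContinuousMap.evalCLM ℝ x).comp W.subtypeL
    change τ _ = E (∫ s, G s)
    have hE : ∫ s, E (G s) = E (∫ s, G s) :=
      ContinuousLinearMap.integral_comp_comm (𝕜 := ℝ) (Fₗ := ℝ) E hGi
    rw [← hE, hτe]
    refine integral_congr_ae (Eventually.of_forall fun s => ?_)
    change φ s * σ (lin K w x + b - s) = φ s * σ (lin K w x + (b - s))
    congr 2
    ring
  rw [key]
  exact Subtype.mem _

/-- Differentiation step. -/
lemma deriv_mem {d : ℕ} (K : Set (Fin d → ℝ)) [CompactSpace K] (f : ℝ → ℝ) (hf : Continuous f)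
    (f' : ℝ → ℝ) (hf' : Continuous f') (hd : ∀ t, HasDerivAt f (f' t) t)
    (W : Submodule ℝ C(K, ℝ)) (hW : IsClosed (W : Set C(K, ℝ)))
    (u : Fin d → ℝ) (m : C(K, ℝ))
    (h : ∀ w h, m * ridge K f hf w h ∈ W) (w : Fin d → ℝ) (b : ℝ) :
    (m * lin K u) * ridge K f' hf' w b ∈ W := by
  let Φ : C(ℝ × K, ℝ) := ⟨fun p => ∫ s in (0:ℝ)..1,
      f' ((lin K w p.2 + b) + s * (p.1 * lin K u p.2)), by
    refine intervalIntegral.continuous_parametric_intervalIntegral_of_continuous' ?_ 0 1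
    simp only [Function.uncurry_def]
    fun_prop⟩
  let S : Set ℝ := {δ | (m * lin K u) * Φ.curry δ ∈ W}
  have hS : IsClosed S := hW.preimage (continuous_const.mul Φ.curry.continuous)
  have hne : ∀ δ : ℝ, δ ≠ 0 → δ ∈ S := by
    intro δ hδ
    have hmem : δ⁻¹ • (m * ridge K f hf (w + δ • u) b - m * ridge K f hf w b) ∈ W :=
      W.smul_mem _ (W.sub_mem (h _ _) (h _ _))
    change _ ∈ W
    convert hmem using 1
    ext x
    set y := (∑ j : Fin d, w j * x.1 j) + b with hy
    set c := ∑ j : Fin d, u j * x.1 j with hc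
    change (m x * c) * (∫ s in (0:ℝ)..1, f' (y + s * (δ * c))) =
      δ⁻¹ * (m x * f ((∑ j : Fin d, (w j + δ * u j) * x.1 j) + b) - m x * f y)
    have h1 : (∑ j : Fin d, (w j + δ * u j) * x.1 j) + b = y + δ * c := by
      simp only [hy, hc, add_mul, Finset.sum_add_distrib, Finset.mul_sum, mul_assoc]
      ring
    have h2 : ∫ s in (0:ℝ)..1, f' (y + s * (δ * c)) * (δ * c) = f (y + δ * c) - f y := by
      have := intervalIntegral.integral_eq_sub_of_hasDerivAt (a := 0) (b := 1)
        (f := fun s => f (y + s * (δ * c))) (f' := fun s => f' (y + s * (δ * c)) * (δ * c))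
        (fun s _ => by
          have hi : HasDerivAt (fun s : ℝ => y + s * (δ * c)) (δ * c) s := by
            simpa using ((hasDerivAt_id s).mul_const (δ * c)).const_add y
          exact (hd _).comp s hi)
        (by apply Continuous.intervalIntegrable; fun_prop)
      simpa using this
    rw [intervalIntegral.integral_mul_const] at h2
    rw [h1]
    have h3 : f (y + δ * c) = f y + (∫ s in (0:ℝ)..1, f' (y + s * (δ * c))) * (δ * c) := by
      linarith
    rw [h3]
    field_simp
    ring
  have h0 : (0 : ℝ) ∈ S := by
    have hdense : Dense ({0}ᶜ : Set ℝ) := dense_compl_singleton 0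
    have hsub : ({0}ᶜ : Set ℝ) ⊆ S := fun δ hδ => hne δ hδ
    have := hdense.mono hsub
    rw [← hS.closure_eq, this.closure_eq]
    trivial
  have h0' : (m * lin K u) * Φ.curry 0 ∈ W := h0
  convert h0' using 2
  ext x
  change f' (lin K w x + b) = ∫ s in (0:ℝ)..1, f' ((lin K w x + b) + s * (0 * lin K u x))
  simp

lemma iter_mem {d : ℕ} (K : Set (Fin d → ℝ)) [CompactSpace K] (τ : ℝ → ℝ)
    (hτ : ContDiff ℝ (⊤ : ℕ∞) τ)
    (W : Submodule ℝ C(K, ℝ)) (hW : IsClosed (W : Set C(K, ℝ)))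
    (h : ∀ w h, ridge K τ hτ.continuous w h ∈ W) (u : Fin d → ℝ) (k : ℕ) :
    ∃ hc : Continuous (iteratedDeriv k τ),
      ∀ w b, (lin K u) ^ k * ridge K (iteratedDeriv k τ) hc w b ∈ W := by
  have hcont : ∀ k, Continuous (iteratedDeriv k τ) := fun k =>
    hτ.continuous_iteratedDeriv k (by exact_mod_cast le_top)
  refine ⟨hcont k, ?_⟩
  induction k with
  | zero =>
    intro w b
    have := h w b
    simpa [ridge] using this
  | succ k ih =>
    intro w b
    rw [pow_succ]
    refine deriv_mem K _ (hcont k) _ (hcont (k + 1)) (fun t => ?_) W hW u _ ih w b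
    rw [iteratedDeriv_succ]
    refine DifferentiableAt.hasDerivAt ?_
    exact (hτ.differentiable_iteratedDeriv k (by exact_mod_cast ENat.natCast_lt_top k)) t

lemma pow_mem {d : ℕ} (K : Set (Fin d → ℝ)) [CompactSpace K] (σ : ℝ → ℝ) (hσ : Continuous σ)
    (hσp : ¬ ∃ p : Polynomial ℝ, ∀ t : ℝ, σ t = Polynomial.eval t p)
    (W : Submodule ℝ C(K, ℝ)) (hW : IsClosed (W : Set C(K, ℝ)))
    (h : ∀ w h, ridge K σ hσ w h ∈ W) (u : Fin d → ℝ) (k : ℕ) : (lin K u) ^ k ∈ W := by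
  by_contra hk
  apply hσp
  let φ : ℕ → ContDiffBump (0 : ℝ) := fun n =>
    { rIn := 1 / ((n : ℝ) + 1) / 2
      rOut := 1 / ((n : ℝ) + 1)
      rIn_pos := by positivity
      rIn_lt_rOut := by
        have : (0:ℝ) < 1 / ((n : ℝ) + 1) := by positivity
        linarith }
  let F : ℕ → ℝ → ℝ := fun n =>
    convolution ((φ n).normed volume) σ (ContinuousLinearMap.lsmul ℝ ℝ) volume
  refine poly_of_limit k σ F (fun n => ?_) (fun t => ?_)
  · have hs : ContDiff ℝ (⊤ : ℕ∞) (F n) :=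
      (φ n).hasCompactSupport_normed.contDiff_convolution_left _ (φ n).contDiff_normed
        hσ.locallyIntegrable
    refine poly_of_iteratedDeriv k (F n) hs fun t => ?_
    have hm : ∀ w h, ridge K (F n) hs.continuous w h ∈ W := fun w b =>
      conv_mem K σ hσ W hW h ((φ n).normed volume) (φ n).continuous_normed
        (φ n).hasCompactSupport_normed (F n) hs.continuous (fun y => rfl) w b
    obtain ⟨hc, hmem⟩ := iter_mem K (F n) hs W hW hm u k
    by_contra hne
    apply hk
    have := W.smul_mem (iteratedDeriv k (F n) t)⁻¹ (hmem 0 t)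
    convert this using 1
    ext x
    simp [ridge]
    field_simp
  · exact ContDiffBump.convolution_tendsto_right_of_continuous
      (tendsto_one_div_add_atTop_nhds_zero_nat) hσ t

lemma lin_add {d : ℕ} (K : Set (Fin d → ℝ)) (u v : Fin d → ℝ) :
    lin K (u + v) = lin K u + lin K v := by
  ext x; simp [lin, add_mul, Finset.sum_add_distrib]

lemma top_of_pow {d : ℕ} (K : Set (Fin d → ℝ)) [CompactSpace K]
    (W : Submodule ℝ C(K, ℝ)) (hW : IsClosed (W : Set C(K, ℝ)))
    (h : ∀ u k, (lin K u) ^ k ∈ W) : W = ⊤ := by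
  let e : (Fin d → ℝ) → C(K, ℝ) := fun u => NormedSpace.exp (lin K u)
  have he : ∀ u, e u ∈ W := by
    intro u
    have hs := NormedSpace.exp_series_hasSum_exp' (𝕂 := ℝ) (lin K u)
    exact hW.mem_of_tendsto hs (Eventually.of_forall fun s =>
      W.sum_mem fun i _ => W.smul_mem _ (h u i))
  have hadd : ∀ u v, e (u + v) = e u * e v := by
    intro u v
    simp only [e, lin_add]
    exact NormedSpace.exp_add
  have h0 : e 0 = 1 := by
    have : lin K (0 : Fin d → ℝ) = 0 := by ext x; simp [lin]
    simp [e, this]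
  have hev : ∀ u x, e u x = Real.exp (lin K u x) := by
    intro u x
    have := NormedSpace.map_exp (ContinuousMap.evalAlgHom ℝ ℝ x : C(K, ℝ) →ₐ[ℝ] ℝ) 
      (continuous_eval_const x) (lin K u)
    rw [Real.exp_eq_exp_ℝ]
    exact this
  let M : Submonoid C(K, ℝ) :=
    { carrier := Set.range e
      mul_mem' := by
        rintro _ _ ⟨u, rfl⟩ ⟨v, rfl⟩
        exact ⟨u + v, hadd u v⟩
      one_mem' := ⟨0, h0⟩ }
  let A : Subalgebra ℝ C(K, ℝ) := Algebra.adjoin ℝ (M : Set C(K, ℝ))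
  have hA : (A : Set C(K, ℝ)) ⊆ W := by
    have : Subalgebra.toSubmodule A ≤ W := by
      rw [Algebra.adjoin_eq_span, Submonoid.closure_eq, Submodule.span_le]
      rintro _ ⟨u, rfl⟩
      exact he u
    exact this
  have hsep : A.SeparatesPoints := by
    intro x y hxy
    have : ∃ j, x.1 j ≠ y.1 j := by
      by_contra hcon
      push Not at hcon
      exact hxy (Subtype.ext (funext hcon))
    obtain ⟨j, hj⟩ := this
    refine ⟨e (Pi.single j 1), ⟨e (Pi.single j 1), Algebra.subset_adjoin ⟨_, rfl⟩, rfl⟩, ?_⟩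
    rw [hev, hev]
    intro hexp
    apply hj
    have := Real.exp_injective hexp
    simpa [lin, Pi.single_apply] using this
  have htop := ContinuousMap.subalgebra_topologicalClosure_eq_top_of_separatesPoints A hsep
  rw [eq_top_iff]
  intro g _
  have hg : g ∈ A.topologicalClosure := by rw [htop]; trivial
  have hg' : g ∈ closure (A : Set C(K, ℝ)) := hg
  exact closure_minimal hA hW hg'

end PinkusUA

/-- Theorem 1 (Pinkus universal approximation): a continuous non-polynomial
activation `σ` yields one-hidden-layer networks
`x ↦ ∑_i c_i σ(⟨w_i, x⟩ + h_i)` that approximate any continuous function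
uniformly on a compact set `K ⊆ ℝ^d`. -/
theorem pinkus_universal_approximation
    (σ : ℝ → ℝ) (hσc : Continuous σ)
    (hσp : ¬ ∃ p : Polynomial ℝ, ∀ t : ℝ, σ t = Polynomial.eval t p)
    (d : ℕ) (hd : 1 ≤ d)
    (K : Set (Fin d → ℝ)) (hK : IsCompact K)
    (f : (Fin d → ℝ) → ℝ) (hf : ContinuousOn f K)
    (ε : ℝ) (hε : 0 < ε) :
    ∃ (N : ℕ) (c h : Fin N → ℝ) (w : Fin N → Fin d → ℝ),
      ∀ x ∈ K, |f x - ∑ i : Fin N, c i * σ ((∑ j : Fin d, w i j * x j) + h i)| < ε := by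
  have : CompactSpace K := isCompact_iff_compactSpace.1 hK
  let R : (Fin d → ℝ) × ℝ → C(K, ℝ) := fun p => PinkusUA.ridge K σ hσc p.1 p.2
  let V : Submodule ℝ C(K, ℝ) := Submodule.span ℝ (Set.range R)
  have hcl : IsClosed (V.topologicalClosure : Set C(K, ℝ)) := V.isClosed_topologicalClosure
  have hmem : ∀ w h, PinkusUA.ridge K σ hσc w h ∈ V.topologicalClosure := fun w h =>
    V.le_topologicalClosure (Submodule.subset_span ⟨(w, h), rfl⟩)
  have htop : V.topologicalClosure = ⊤ := PinkusUA.top_of_pow K _ hcl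
    (PinkusUA.pow_mem K σ hσc hσp _ hcl hmem)
  let F : C(K, ℝ) := ⟨fun x => f x.1, hf.domRestrict⟩
  have hF : F ∈ closure (V : Set C(K, ℝ)) := by
    have : F ∈ V.topologicalClosure := by rw [htop]; trivial
    exact this
  obtain ⟨g, hgV, hg⟩ := Metric.mem_closure_iff.1 hF ε hε
  obtain ⟨N, c, v, hv⟩ := Submodule.mem_span_set'.1 hgV
  choose p hp using fun i => (v i).2
  refine ⟨N, c, fun i => (p i).2, fun i => (p i).1, fun x hx => ?_⟩
  have hx' := (ContinuousMap.dist_apply_le_dist (f := F) (g := g) ⟨x, hx⟩).trans_lt hg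
  rw [Real.dist_eq] at hx'
  have hgx : g ⟨x, hx⟩ = ∑ i : Fin N, c i * σ ((∑ j : Fin d, (p i).1 j * x j) + (p i).2) := ?_
  · rw [hgx] at hx'
    exact hx'
  rw [← hv, ContinuousMap.coe_sum, Finset.sum_apply]
  refine Finset.sum_congr rfl fun i _ => ?_
  rw [← hp i]
  rfl
end

section
/- (Theorem 2, invariant universal approximation, Yarotsky.) Let σ : ℝ → ℝ be a continuous activation function that is not a polynomial. Let G be a finite group acting linearly on W = ℝ^d, and let f_1,…,f_{N_inv} : W → ℝ be polynomial functions, each G-invariant, which generate the ℝ-algebra of all G-invariant polynomial functions on W. Let K ⊂ W be a compact G-stable set and let f : K → ℝ be continuous and G-invariant. Then for every ε > 0 there exist N ∈ ℕ and real coefficients c_i, w_{ij}, h_i such that the G-invariant function f̂(x) = ∑_{i=1}^{N} c_i σ(∑_{j=1}^{N_inv} w_{ij} f_j(x) + h_i) satisfies sup_{x ∈ K} |f(x) − f̂(x)| < ε. -/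
namespace YarotskyAux

open MeasureTheory Filter Topology

variable {X : Type*} [TopologicalSpace X] [CompactSpace X]

lemma deriv_step (ℓ : C(X, ℝ) →L[ℝ] ℝ) (a a' : ℝ → C(X, ℝ)) (ha' : Continuous a')
    (hd : ∀ x s, HasDerivAt (fun s => a s x) (a' s x) s) (h0 : ∀ s, ℓ (a s) = 0) (s₀ : ℝ) :
    ℓ (a' s₀) = 0 := by
  have key : a = fun s => a s₀ + ∫ r in s₀..s, a' r := by
    funext s
    ext x
    have h1 := (ContinuousMap.evalCLM ℝ x : C(X, ℝ) →L[ℝ] ℝ).intervalIntegral_comp_comm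
      (ha'.intervalIntegrable (μ := volume) s₀ s)
    have h2 : ∫ r in s₀..s, a' r x = a s x - a s₀ x := by
      apply intervalIntegral.integral_eq_sub_of_hasDerivAt (fun r _ => hd x r)
      exact ((ContinuousMap.evalCLM ℝ x : C(X, ℝ) →L[ℝ] ℝ).continuous.comp ha').intervalIntegrable _ _
    simp only [ContinuousMap.evalCLM_apply] at h1
    rw [ContinuousMap.add_apply, ← h1, h2]
    ring
  have h3 : HasDerivAt a (a' s₀) s₀ := by
    rw [key]
    exact (intervalIntegral.integral_hasDerivAt_right (ha'.intervalIntegrable _ _)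
      (ha'.stronglyMeasurableAtFilter _ _) ha'.continuousAt).const_add _
  have h4 := ℓ.hasFDerivAt.comp_hasDerivAt s₀ h3
  have h5 : (ℓ ∘ a) = fun _ => 0 := funext h0
  rw [h5] at h4
  exact h4.unique (hasDerivAt_const _ _)

lemma list_step {ι : Type*} (F : ι → C(X, ℝ)) (U : Submodule ℝ C(X, ℝ)) (hF : ∀ j, F j ∈ U)
    (ℓ : C(X, ℝ) →L[ℝ] ℝ) (g : ℝ → ℝ) (hg : ContDiff ℝ (⊤ : ℕ∞) g)
    (hgc : ∀ n, Continuous (iteratedDeriv n g))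
    (h0 : ∀ u ∈ U, ℓ ((⟨g, hg.continuous⟩ : C(ℝ, ℝ)).comp u) = 0) (l : List ι) :
    ∀ u ∈ U, ℓ ((l.map F).prod *
      (⟨iteratedDeriv l.length g, hgc _⟩ : C(ℝ, ℝ)).comp u) = 0 := by
  induction l with
  | nil => 
    intro u hu
    simpa using h0 u hu
  | cons j l ih =>
    intro u hu
    have := deriv_step ℓ
      (fun s => (l.map F).prod *
        (⟨iteratedDeriv l.length g, hgc _⟩ : C(ℝ, ℝ)).comp (u + s • F j))
      (fun s => F j * (l.map F).prod *
        (⟨iteratedDeriv (l.length + 1) g, hgc _⟩ : C(ℝ, ℝ)).comp (u + s • F j))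
      (by
        apply Continuous.mul continuous_const
        exact (ContinuousMap.continuous_postcomp _).comp (by fun_prop))
      (by
        intro x s
        simp only [ContinuousMap.mul_apply, ContinuousMap.comp_apply, ContinuousMap.coe_mk,
          ContinuousMap.add_apply, ContinuousMap.smul_apply, smul_eq_mul]
        have e : HasDerivAt (iteratedDeriv l.length g)
            (iteratedDeriv (l.length + 1) g (u x + s * F j x)) (u x + s * F j x) := by
          rw [iteratedDeriv_succ]
          apply DifferentiableAt.hasDerivAt
          apply hg.differentiable_iteratedDeriv
          exact_mod_cast WithTop.coe_lt_top _
        have e2 : HasDerivAt (fun s => u x + s * F j x) (F j x) s := by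
          simpa using ((hasDerivAt_id s).mul_const (F j x)).const_add (u x)
        have := (e.comp s e2).const_mul ((l.map F).prod x)
        refine this.congr_deriv ?_
        ring)
      (fun s => ih _ (U.add_mem hu (U.smul_mem _ (hF j)))) 0
    simpa using this

lemma poly_of_iteratedDeriv (n : ℕ) : ∀ (g : ℝ → ℝ), ContDiff ℝ (⊤ : ℕ∞) g →
    (∀ x, iteratedDeriv n g x = 0) →
    g ∈ Submodule.span ℝ (Set.range fun k : Fin n => fun t : ℝ => t ^ (k : ℕ)) := by
  induction n with
  | zero =>
    intro g _ h
    have : g = 0 := by ext x; simpa using h x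
    rw [this]; exact Submodule.zero_mem _
  | succ n ih =>
    intro g hg h
    have hd : ContDiff ℝ (⊤ : ℕ∞) (deriv g) := by
      apply (contDiff_succ_iff_deriv (n := (⊤ : ℕ∞))).1 _ |>.2.2
      exact hg
    have h1 := ih (deriv g) hd (fun x => by rw [← iteratedDeriv_succ']; exact h x)
    obtain ⟨c, hc⟩ := (Submodule.mem_span_range_iff_exists_fun ℝ).1 h1
    let Q : ℝ → ℝ := fun t => ∑ k : Fin n, c k / (k + 1) * t ^ ((k : ℕ) + 1)
    have hQ : ∀ t, HasDerivAt Q (deriv g t) t := by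
      intro t
      rw [← hc]
      simp only [Finset.sum_apply, Pi.smul_apply, smul_eq_mul]
      apply HasDerivAt.fun_sum
      intro k _
      refine ((hasDerivAt_pow ((k : ℕ) + 1) t).const_mul (c k / (k + 1))).congr_deriv ?_
      have : (k : ℝ) + 1 ≠ 0 := by positivity
      push_cast
      field_simp
    have hz : ∀ t, HasDerivAt (g - Q) 0 t := by
      intro t
      have := ((hg.differentiable (by simp)) t).hasDerivAt.sub (hQ t)
      simpa using this
    have hconst := is_const_of_deriv_eq_zero (fun t => (hz t).differentiableAt)
      (fun t => (hz t).deriv)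
    have hfin : g = (g 0 - Q 0) • (fun t : ℝ => t ^ ((0 : Fin (n + 1)) : ℕ)) +
        ∑ k : Fin n, (c k / (k + 1)) • (fun t : ℝ => t ^ ((k.succ : Fin (n + 1)) : ℕ)) := by
      funext t
      have := hconst t 0
      simp only [Pi.sub_apply] at this
      simp only [Pi.add_apply, Pi.smul_apply, Finset.sum_apply, smul_eq_mul, Fin.val_succ,
        Fin.val_zero, pow_zero, mul_one]
      change g t = g 0 - Q 0 + Q t
      linarith
    rw [hfin]
    refine Submodule.add_mem _ (Submodule.smul_mem _ _ (Submodule.subset_span ⟨0, rfl⟩)) ?_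
    exact Submodule.sum_mem _ fun k _ =>
      Submodule.smul_mem _ _ (Submodule.subset_span ⟨k.succ, rfl⟩)

lemma mollify (σ : ℝ → ℝ) (hσ : Continuous σ)
    (hσp : ¬ ∃ p : Polynomial ℝ, ∀ t : ℝ, σ t = Polynomial.eval t p) (n : ℕ) :
    ∃ φ : ContDiffBump (0 : ℝ), ∃ b : ℝ, iteratedDeriv n
      (convolution (φ.normed volume) σ (ContinuousLinearMap.lsmul ℝ ℝ) volume) b ≠ 0 := by
  by_contra! hcon
  apply hσp
  let S := Submodule.span ℝ (Set.range fun k : Fin n => fun t : ℝ => t ^ (k : ℕ))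
  have hfd : FiniteDimensional ℝ S := FiniteDimensional.span_of_finite ℝ (Set.finite_range _)
  have hcl : IsClosed (S : Set (ℝ → ℝ)) := Submodule.closed_of_finiteDimensional S
  have hS : ∀ φ : ContDiffBump (0 : ℝ),
      (convolution (φ.normed volume) σ (ContinuousLinearMap.lsmul ℝ ℝ) volume) ∈ S := by
    intro φ
    apply poly_of_iteratedDeriv n _ _ (hcon φ)
    exact φ.hasCompactSupport_normed.contDiff_convolution_left _ φ.contDiff_normed
      hσ.locallyIntegrable
  let φ : ℕ → ContDiffBump (0 : ℝ) := fun m =>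
    ⟨1 / (2 * ((m : ℝ) + 1)), 1 / ((m : ℝ) + 1), by positivity, by
      apply one_div_lt_one_div_of_lt <;> linarith [(Nat.cast_nonneg m : (0 : ℝ) ≤ m)]⟩
  have hlim : Tendsto (fun m => convolution ((φ m).normed volume) σ
      (ContinuousLinearMap.lsmul ℝ ℝ) volume) atTop (𝓝 σ) := by
    rw [tendsto_pi_nhds]
    intro x
    exact ContDiffBump.convolution_tendsto_right_of_continuous
      tendsto_one_div_add_atTop_nhds_zero_nat hσ x
  have hσS : σ ∈ S := hcl.mem_of_tendsto hlim (Eventually.of_forall fun m => hS _)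
  obtain ⟨c, hc⟩ := (Submodule.mem_span_range_iff_exists_fun ℝ).1 hσS
  refine ⟨∑ k : Fin n, Polynomial.C (c k) * Polynomial.X ^ (k : ℕ), fun t => ?_⟩
  rw [← hc]
  simp [Polynomial.eval_finsetSum]

lemma conv_step (U : Submodule ℝ C(X, ℝ)) (h1 : 1 ∈ U) (ℓ : C(X, ℝ) →L[ℝ] ℝ)
    (σ : ℝ → ℝ) (hσ : Continuous σ) (h0 : ∀ u ∈ U, ℓ ((⟨σ, hσ⟩ : C(ℝ, ℝ)).comp u) = 0)
    (φ : ContDiffBump (0 : ℝ))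
    (hg : Continuous (convolution (φ.normed volume) σ (ContinuousLinearMap.lsmul ℝ ℝ) volume)) :
    ∀ u ∈ U, ℓ ((⟨_, hg⟩ : C(ℝ, ℝ)).comp u) = 0 := by
  intro u hu
  let A : ℝ → C(X, ℝ) := fun t => φ.normed volume t • (⟨σ, hσ⟩ : C(ℝ, ℝ)).comp (u - t • 1)
  have hA : Continuous A := by
    apply Continuous.smul φ.continuous_normed
    exact (ContinuousMap.continuous_postcomp _).comp (by fun_prop)
  have hAi : Integrable A volume := by
    apply hA.integrable_of_hasCompactSupport
    exact φ.hasCompactSupport_normed.smul_right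
  have e : (⟨_, hg⟩ : C(ℝ, ℝ)).comp u = ∫ t, A t := by
    ext x
    rw [ContinuousMap.integral_apply hAi]
    simp [A, convolution]
  rw [e, ← ℓ.integral_comp_comm hAi]
  have : ∀ t, ℓ (A t) = 0 := fun t => by
    simp only [A, map_smul]
    rw [h0 _ (U.sub_mem hu (U.smul_mem _ h1)), smul_zero]
  simp [this]

lemma kill_poly {ι : Type*} (F : ι → C(X, ℝ)) (U : Submodule ℝ C(X, ℝ)) (hF : ∀ j, F j ∈ U)
    (h1 : 1 ∈ U) (ℓ : C(X, ℝ) →L[ℝ] ℝ)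
    (σ : ℝ → ℝ) (hσ : Continuous σ)
    (hσp : ¬ ∃ p : Polynomial ℝ, ∀ t : ℝ, σ t = Polynomial.eval t p)
    (h0 : ∀ u ∈ U, ℓ ((⟨σ, hσ⟩ : C(ℝ, ℝ)).comp u) = 0) (q : MvPolynomial ι ℝ) :
    ℓ (MvPolynomial.aeval F q) = 0 := by
  have hl : ∀ l : List ι, ℓ ((l.map F).prod) = 0 := by
    intro l
    obtain ⟨φ, b, hb⟩ := mollify σ hσ hσp l.length
    have hg : ContDiff ℝ (⊤ : ℕ∞)
        (convolution (φ.normed volume) σ (ContinuousLinearMap.lsmul ℝ ℝ) volume) :=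
      φ.hasCompactSupport_normed.contDiff_convolution_left _ φ.contDiff_normed
        hσ.locallyIntegrable
    have := list_step F U hF ℓ _ hg
      (fun n => hg.continuous_iteratedDeriv n (by exact_mod_cast le_top))
      (conv_step U h1 ℓ σ hσ h0 φ hg.continuous) l (b • 1) (U.smul_mem _ h1)
    set B := iteratedDeriv l.length
      (convolution (φ.normed volume) σ (ContinuousLinearMap.lsmul ℝ ℝ) volume) b with hB
    have e : ∀ (H : C(ℝ, ℝ)), H b = B → (l.map F).prod * H.comp (b • (1 : C(X, ℝ))) =
        B • (l.map F).prod := by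
      intro H hH
      ext x
      simp [hH, mul_comm]
    rw [e _ rfl, map_smul, smul_eq_mul] at this
    exact (mul_eq_zero.1 this).resolve_left hb
  suffices ∀ l : List ι, ℓ ((l.map F).prod * MvPolynomial.aeval F q) = 0 by
    simpa using this []
  induction q using MvPolynomial.induction_on with
  | C a =>
    intro l
    have : (l.map F).prod * MvPolynomial.aeval F (MvPolynomial.C a) = a • (l.map F).prod := by
      ext x; simp [mul_comm]
    rw [this, map_smul, hl, smul_zero]
  | add p q hp hq =>
    intro l
    rw [map_add, mul_add, map_add, hp, hq, add_zero]
  | mul_X p i hp =>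
    intro l
    rw [← hp (i :: l)]
    congr 1
    simp only [map_mul, MvPolynomial.aeval_X, List.map_cons, List.prod_cons]
    ring

lemma approx_poly {ι : Type*} [Fintype ι] (F : ι → C(X, ℝ))
    (σ : ℝ → ℝ) (hσ : Continuous σ)
    (hσp : ¬ ∃ p : Polynomial ℝ, ∀ t : ℝ, σ t = Polynomial.eval t p)
    (q : MvPolynomial ι ℝ) (ε : ℝ) (hε : 0 < ε) :
    ∃ (N : ℕ) (c h : Fin N → ℝ) (w : Fin N → ι → ℝ), ∀ x,
      |MvPolynomial.eval (fun j => F j x) q -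
        ∑ i, c i * σ ((∑ j, w i j * F j x) + h i)| < ε := by
  let U : Submodule ℝ C(X, ℝ) := Submodule.span ℝ (Set.range F) ⊔ Submodule.span ℝ {1}
  let s : Set C(X, ℝ) := (fun u => (⟨σ, hσ⟩ : C(ℝ, ℝ)).comp u) '' (U : Set C(X, ℝ))
  let S := Submodule.span ℝ s
  have hmem : MvPolynomial.aeval F q ∈ closure (S : Set C(X, ℝ)) := by
    by_contra hn
    obtain ⟨ℓ, r, hlt, hr⟩ := geometric_hahn_banach_closed_point
      (S.convex.closure) isClosed_closure hn
    have hS : ∀ a ∈ S, ℓ a = 0 := by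
      intro a ha
      by_contra hne
      have := hlt ((r / ℓ a) • a) (subset_closure (S.smul_mem _ ha))
      rw [map_smul, smul_eq_mul, div_mul_cancel₀ _ hne] at this
      exact lt_irrefl _ this
    have h00 := hlt 0 (subset_closure S.zero_mem)
    have := kill_poly F U (fun j => (le_sup_left : _ ≤ U) (Submodule.subset_span ⟨j, rfl⟩))
      ((le_sup_right : _ ≤ U) (Submodule.subset_span rfl)) ℓ σ hσ hσp
      (fun u hu => hS _ (Submodule.subset_span ⟨u, hu, rfl⟩)) q
    rw [map_zero] at h00
    linarith
  obtain ⟨v, hv, hd⟩ := Metric.mem_closure_iff.1 hmem ε hε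
  obtain ⟨N, c, g, hg⟩ := Submodule.mem_span_set'.1 hv
  have hgi : ∀ i, ∃ (w : ι → ℝ) (h : ℝ), ∀ x, (g i : C(X, ℝ)) x =
      σ ((∑ j, w j * F j x) + h) := by
    intro i
    obtain ⟨u, hu, hui⟩ := (g i).2
    obtain ⟨y, hy, z, hz, hyz⟩ := Submodule.mem_sup.1 hu
    obtain ⟨w, rfl⟩ := (Submodule.mem_span_range_iff_exists_fun ℝ).1 hy
    obtain ⟨h, rfl⟩ := Submodule.mem_span_singleton.1 hz
    refine ⟨w, h, fun x => ?_⟩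
    rw [← hui, ← hyz]
    simp [ContinuousMap.sum_apply]
  choose w h hwh using hgi
  refine ⟨N, c, h, w, fun x => ?_⟩
  have h2 := (ContinuousMap.dist_apply_le_dist (f := MvPolynomial.aeval F q) (g := v) x).trans_lt hd
  rw [Real.dist_eq] at h2
  have e1 : MvPolynomial.eval (fun j => F j x) q = MvPolynomial.aeval F q x := by
    have := MvPolynomial.comp_aeval_apply (φ := ContinuousMap.evalAlgHom ℝ ℝ x) F q
    simp only [ContinuousMap.evalAlgHom_apply] at this
    rw [this, ← MvPolynomial.coe_aeval_eq_eval]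
    rfl
  have e2 : ∑ i, c i * σ ((∑ j, w i j * F j x) + h i) = v x := by
    rw [← hg, ContinuousMap.sum_apply]
    simp [hwh]
  rw [e1, e2]
  exact h2

lemma weierstrass (d : ℕ) (K : Set (Fin d → ℝ)) (hK : IsCompact K)
    (f : (Fin d → ℝ) → ℝ) (hf : ContinuousOn f K) (ε : ℝ) (hε : 0 < ε) :
    ∃ p : MvPolynomial (Fin d) ℝ, ∀ x ∈ K, |f x - MvPolynomial.eval x p| < ε := by
  have : CompactSpace K := isCompact_iff_compactSpace.1 hK
  let F : Fin d → C(K, ℝ) := fun j => ⟨fun x => (x : Fin d → ℝ) j,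
    (continuous_apply j).comp continuous_subtype_val⟩
  let A : Subalgebra ℝ C(K, ℝ) := (MvPolynomial.aeval F).range
  have hA : A.SeparatesPoints := by
    intro x y hxy
    have : ∃ j, (x : Fin d → ℝ) j ≠ (y : Fin d → ℝ) j := by
      by_contra! h
      exact hxy (Subtype.ext (funext h))
    obtain ⟨j, hj⟩ := this
    exact ⟨F j, ⟨F j, ⟨MvPolynomial.X j, by simp⟩, rfl⟩, hj⟩
  obtain ⟨⟨_, p, rfl⟩, hp⟩ :=
    ContinuousMap.exists_mem_subalgebra_near_continuous_of_separatesPoints A hA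
    (K.domRestrict f) hf.domRestrict ε hε
  refine ⟨p, fun x hx => ?_⟩
  have h2 := hp ⟨x, hx⟩
  rw [Real.norm_eq_abs, abs_sub_comm] at h2
  have := MvPolynomial.comp_aeval_apply (φ := ContinuousMap.evalAlgHom ℝ ℝ (⟨x, hx⟩ : K)) F p
  simp only [ContinuousMap.evalAlgHom_apply] at this
  have e1 : MvPolynomial.eval x p = MvPolynomial.aeval F p ⟨x, hx⟩ := by
    rw [this, ← MvPolynomial.coe_aeval_eq_eval]
    rfl
  rw [e1]
  exact h2

lemma comp_linear (d : ℕ) (T : (Fin d → ℝ) →ₗ[ℝ] (Fin d → ℝ)) (p : MvPolynomial (Fin d) ℝ) :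
    ∃ q : MvPolynomial (Fin d) ℝ, ∀ x, MvPolynomial.eval x q = MvPolynomial.eval (T x) p := by
  refine ⟨MvPolynomial.bind₁ (fun i => ∑ j, MvPolynomial.C (T (Pi.single j 1) i) *
    MvPolynomial.X j) p, fun x => ?_⟩
  rw [← MvPolynomial.coe_aeval_eq_eval, ← MvPolynomial.coe_aeval_eq_eval]
  simp only [RingHom.coe_coe, MvPolynomial.aeval_bind₁]
  congr 2
  funext i
  have : T x = ∑ j, x j • T (Pi.single j 1) := by
    conv_lhs => rw [pi_eq_sum_univ' x]
    rw [map_sum]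
    simp
  rw [this]
  simp [mul_comm]

end YarotskyAux



/-- Theorem 2 (Yarotsky): given a finite group `G` acting linearly on `W = ℝ^d`,
a finite generating set `f_j = eval (P j)` of the algebra of `G`-invariant
polynomial functions, and a continuous non-polynomial activation `σ`, every
continuous `G`-invariant function on a compact `G`-stable set `K` can be
uniformly approximated by `x ↦ ∑_i c_i σ(∑_j w_{ij} f_j(x) + h_i)`. -/
theorem yarotsky_invariant_universal_approximation
    (σ : ℝ → ℝ) (hσc : Continuous σ)
    (hσp : ¬ ∃ p : Polynomial ℝ, ∀ t : ℝ, σ t = Polynomial.eval t p)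
    (d : ℕ) (G : Type) [Group G] [Fintype G]
    (ρ : G →* ((Fin d → ℝ) →ₗ[ℝ] (Fin d → ℝ)))
    (Ninv : ℕ) (P : Fin Ninv → MvPolynomial (Fin d) ℝ)
    (hPinv : ∀ (j : Fin Ninv) (g : G) (x : Fin d → ℝ),
      MvPolynomial.eval (ρ g x) (P j) = MvPolynomial.eval x (P j))
    (hgen : ∀ p : MvPolynomial (Fin d) ℝ,
      (∀ (g : G) (x : Fin d → ℝ), MvPolynomial.eval (ρ g x) p = MvPolynomial.eval x p) →
      ∃ q : MvPolynomial (Fin Ninv) ℝ, ∀ x : Fin d → ℝ,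
        MvPolynomial.eval x p = MvPolynomial.eval (fun j => MvPolynomial.eval x (P j)) q)
    (K : Set (Fin d → ℝ)) (hK : IsCompact K)
    (hKstable : ∀ (g : G), ∀ x ∈ K, ρ g x ∈ K)
    (f : (Fin d → ℝ) → ℝ) (hf : ContinuousOn f K)
    (hfinv : ∀ (g : G), ∀ x ∈ K, f (ρ g x) = f x)
    (ε : ℝ) (hε : 0 < ε) :
    ∃ (N : ℕ) (c h : Fin N → ℝ) (w : Fin N → Fin Ninv → ℝ),
      ∀ x ∈ K,
        |f x - ∑ i : Fin N,
            c i * σ ((∑ j : Fin Ninv, w i j * MvPolynomial.eval x (P j)) + h i)| < ε := by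
  obtain ⟨p, hp⟩ := YarotskyAux.weierstrass d K hK f hf (ε / 2) (by linarith)
  choose p' hp' using fun g : G => YarotskyAux.comp_linear d (ρ g) p
  have hc : (0 : ℝ) < Fintype.card G := by exact_mod_cast Fintype.card_pos
  let ps : MvPolynomial (Fin d) ℝ := MvPolynomial.C ((Fintype.card G : ℝ)⁻¹) * ∑ g, p' g
  have hps : ∀ x, MvPolynomial.eval x ps =
      (Fintype.card G : ℝ)⁻¹ * ∑ g, MvPolynomial.eval (ρ g x) p := by
    intro x
    simp [ps, hp']
  obtain ⟨q, hq⟩ := hgen ps (by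
    intro g x
    rw [hps, hps]
    congr 1
    rw [← Equiv.sum_comp (Equiv.mulRight g) (fun g' => MvPolynomial.eval (ρ g' x) p)]
    simp)
  have : CompactSpace K := isCompact_iff_compactSpace.1 hK
  obtain ⟨N, c, h, w, hN⟩ := YarotskyAux.approx_poly (X := K)
    (fun j => ⟨fun x => MvPolynomial.eval (x : Fin d → ℝ) (P j),
      (MvPolynomial.continuous_eval (P j)).comp continuous_subtype_val⟩) σ hσc hσp q (ε / 2)
    (by linarith)
  refine ⟨N, c, h, w, fun x hx => ?_⟩
  have h1 := hN ⟨x, hx⟩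
  simp only [ContinuousMap.coe_mk] at h1
  rw [← hq x] at h1
  have h2 : |f x - MvPolynomial.eval x ps| ≤ ε / 2 := by
    have e : f x - MvPolynomial.eval x ps =
        (Fintype.card G : ℝ)⁻¹ * ∑ g, (f (ρ g x) - MvPolynomial.eval (ρ g x) p) := by
      rw [hps, Finset.sum_sub_distrib, Finset.sum_congr rfl (fun g _ => hfinv g x hx)]
      simp only [Finset.sum_const, Finset.card_univ, nsmul_eq_mul]
      field_simp
    rw [e, abs_mul, abs_of_pos (inv_pos.2 hc), inv_mul_le_iff₀ hc]
    calc _ ≤ ∑ g, |f (ρ g x) - MvPolynomial.eval (ρ g x) p| := Finset.abs_sum_le_sum_abs _ _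
      _ ≤ ∑ _g : G, ε / 2 := Finset.sum_le_sum fun g _ => (hp _ (hKstable g x hx)).le
      _ = _ := by simp
  calc _ ≤ _ := abs_sub_le _ (MvPolynomial.eval x ps) _
    _ < ε := by linarith
end

section
/- (Proposition 1, universality of the proposed G-invariant network, scalar-feature case.) Let σ : ℝ → ℝ be a continuous activation function that is not a polynomial, let n ≥ 1, let G be a finite subgroup of the symmetric group S_n, and let V ⊂ ℝ^n be a compact G-stable set contained in [0,1]^n. Let f : V → ℝ be continuous and G-invariant. Then for every ε > 0 there exist n_mid ∈ ℕ, one-hidden-layer networks φ_1,…,φ_n : ℝ → ℝ^{n_mid} with activation σ, and a one-hidden-layer network f_out : ℝ^{n_mid} → ℝ with activation σ, such that sup_{x ∈ V} | f(x) − f_out( ∑_{g ∈ G} ∏_{j=1}^{n} φ_j(x_{g(j)}) ) | < ε, where the product over j is taken componentwise in ℝ^{n_mid}. -/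
open MeasureTheory

def DiffZero : ℕ → (ℝ → ℝ) → Prop
  | 0, g => ∀ x, g x = 0
  | k + 1, g => ∀ δ : ℝ, DiffZero k (fun x => g (x + δ) - g x)

lemma diffZero_integral (k : ℕ) : ∀ (F : ℝ → ℝ → ℝ), (Continuous fun q : ℝ × ℝ => F q.1 q.2) →
    (∀ u, DiffZero k (F u)) → DiffZero k (fun x => ∫ u in (0:ℝ)..1, F u x) := by
  induction k with
  | zero =>
    intro F _ h x
    have : ∀ u, F u x = 0 := fun u => h u x
    simp [this]
  | succ k ih =>
    intro F hF h δ
    have hc : ∀ x, Continuous fun u => F u x := fun x =>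
      hF.comp (continuous_id.prodMk continuous_const)
    have h1 := ih (fun u x => F u (x + δ) - F u x)
      ((hF.comp (continuous_fst.prodMk (continuous_snd.add continuous_const))).sub hF)
      (fun u => h u δ)
    have h2 : (fun x => (∫ u in (0:ℝ)..1, F u (x + δ)) - ∫ u in (0:ℝ)..1, F u x) =
        fun x => ∫ u in (0:ℝ)..1, (F u (x + δ) - F u x) := by
      funext x
      rw [intervalIntegral.integral_sub ((hc _).intervalIntegrable _ _)
        ((hc _).intervalIntegrable _ _)]
    show DiffZero k _
    rw [h2]
    exact h1

lemma exists_antideriv (q : Polynomial ℝ) : ∃ P : Polynomial ℝ, P.derivative = q := by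
  induction q using Polynomial.induction_on' with
  | add p q hp hq =>
    obtain ⟨P, rfl⟩ := hp
    obtain ⟨Q, rfl⟩ := hq
    exact ⟨P + Q, by simp⟩
  | monomial n a =>
    refine ⟨Polynomial.monomial (n+1) (a / (n+1)), ?_⟩
    rw [Polynomial.derivative_monomial]
    have : (n:ℝ) + 1 ≠ 0 := by positivity
    congr 1
    push_cast
    field_simp

lemma poly_of_deriv (g : ℝ → ℝ) (q : Polynomial ℝ) (h : ∀ x, HasDerivAt g (q.eval x) x) :
    ∃ p : Polynomial ℝ, ∀ x, g x = p.eval x := by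
  obtain ⟨P, hP⟩ := exists_antideriv q
  refine ⟨P + Polynomial.C (g 0 - P.eval 0), fun x => ?_⟩
  have := is_const_of_deriv_eq_zero (f := fun x => g x - P.eval x)
    (fun x => ((h x).sub (P.hasDerivAt x)).differentiableAt)
    (fun x => by
      have := ((h x).sub (P.hasDerivAt x)).deriv
      rw [hP, sub_self] at this
      exact this) x 0
  simp only [Polynomial.eval_add, Polynomial.eval_C]
  linarith

lemma hasDerivAt_slide (g : ℝ → ℝ) (hg : Continuous g) (δ x : ℝ) :
    HasDerivAt (fun x => ∫ u in (0:ℝ)..δ, g (x + u)) (g (x + δ) - g x) x := by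
  have hI : ∀ y, HasDerivAt (fun x => ∫ u in (0:ℝ)..x, g u) (g y) y := fun y =>
    intervalIntegral.integral_hasDerivAt_right (hg.intervalIntegrable _ _)
      hg.stronglyMeasurable.stronglyMeasurableAtFilter hg.continuousAt
  have h2 : (fun x => ∫ u in (0:ℝ)..δ, g (x + u)) =
      fun x => (∫ u in (0:ℝ)..(x + δ), g u) - ∫ u in (0:ℝ)..x, g u := by
    funext x
    rw [intervalIntegral.integral_comp_add_left,
      intervalIntegral.integral_interval_sub_left (hg.intervalIntegrable _ _)
        (hg.intervalIntegrable _ _)]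
    simp
  rw [h2]
  exact ((hI (x + δ)).comp_add_const x δ).sub (hI x)

lemma diffZero_poly (k : ℕ) : ∀ g : ℝ → ℝ, Continuous g → DiffZero k g →
    ∃ p : Polynomial ℝ, ∀ x, g x = p.eval x := by
  induction k with
  | zero => intro g _ h; exact ⟨0, fun x => by simpa using h x⟩
  | succ k ih =>
    intro g hg h
    have hg2 : Continuous fun q : ℝ × ℝ => g (q.2 + q.1) - g q.2 := by fun_prop
    obtain ⟨p, hp⟩ := ih (fun x => ∫ u in (0:ℝ)..1, (g (x + u) - g x))
      (by
        apply intervalIntegral.continuous_parametric_intervalIntegral_of_continuous'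
        show Continuous fun q : ℝ × ℝ => g (q.1 + q.2) - g q.1
        fun_prop)
      (diffZero_integral k (fun u x => g (x + u) - g x) hg2 h)
    obtain ⟨q, hq⟩ := ih (fun x => g (x + 1) - g x) (by fun_prop) (h 1)
    obtain ⟨r, hr⟩ := poly_of_deriv (fun x => ∫ u in (0:ℝ)..1, g (x + u)) q (fun x => by
      have := hasDerivAt_slide g hg 1 x
      rwa [show g (x + 1) - g x = q.eval x from hq x] at this)
    refine ⟨r - p, fun x => ?_⟩
    rw [Polynomial.eval_sub, ← hr, ← hp, intervalIntegral.integral_sub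
      ((by fun_prop : Continuous fun u => g (x + u)).intervalIntegrable _ _) (by simp)]
    simp

section
variable {K : Type*} [TopologicalSpace K] [CompactSpace K]

def QQ (L : C(K, ℝ) →L[ℝ] ℝ) (p : C(K, ℝ)) (k : ℕ) (g : C(ℝ, ℝ)) : Prop :=
  ∀ a h : ℝ, L (p ^ k * g.comp (a • p + ContinuousMap.const K h)) = 0

lemma L_integral (L : C(K, ℝ) →L[ℝ] ℝ) (F : ℝ → C(K, ℝ)) (hF : Continuous F) (G : C(K, ℝ))
    (a b : ℝ) (h : ∀ y, G y = ∫ v in a..b, F v y) : L G = ∫ v in a..b, L (F v) := by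
  have hi := hF.intervalIntegrable (μ := volume) a b
  have : G = ∫ v in a..b, F v := by
    ext y
    rw [h y]
    exact (ContinuousMap.evalCLM ℝ y).intervalIntegral_comp_comm hi
  rw [this]
  exact (L.intervalIntegral_comp_comm hi).symm

lemma cont_curve (p : C(K, ℝ)) (k : ℕ) (g : C(ℝ, ℝ)) (u v : ℝ → ℝ) (hu : Continuous u)
    (hv : Continuous v) :
    Continuous fun s => p ^ k * g.comp (u s • p + ContinuousMap.const K (v s)) := by
  refine continuous_const.mul ((ContinuousMap.continuous_postcomp g).comp ?_)
  exact (hu.smul continuous_const).add (ContinuousMap.continuous_const'.comp hv)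

lemma QQ_step (L : C(K, ℝ) →L[ℝ] ℝ) (p : C(K, ℝ)) (k : ℕ) (g B : C(ℝ, ℝ)) (δ : ℝ)
    (hB : ∀ x, B x = g (x + δ) - g x) (hQ : QQ L p k g) : QQ L p (k + 1) B := by
  let A : C(ℝ, ℝ) := ⟨fun x => ∫ u in (0:ℝ)..δ, g (x + u),
    continuous_iff_continuousAt.2 fun x => (hasDerivAt_slide g g.continuous δ x).continuousAt⟩
  have hA : ∀ x, HasDerivAt A (B x) x := fun x => by
    rw [hB]; exact hasDerivAt_slide g g.continuous δ x
  have hQA : QQ L p k A := by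
    intro a h
    rw [L_integral L (fun u => p ^ k * g.comp (a • p + ContinuousMap.const K (h + u)))
      (cont_curve p k g _ _ continuous_const (by fun_prop)) _ 0 δ]
    · simp [hQ a _]
    · intro y
      show p y ^ k * (∫ u in (0:ℝ)..δ, g (a * p y + h + u)) =
        ∫ u in (0:ℝ)..δ, p y ^ k * g (a * p y + (h + u))
      rw [intervalIntegral.integral_const_mul]
      simp only [add_assoc]
  intro a h
  have hc : Continuous fun v => L (p ^ (k+1) * B.comp (v • p + ContinuousMap.const K h)) :=
    L.continuous.comp (cont_curve p (k+1) B _ _ continuous_id continuous_const)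
  have hz : ∀ b, ∫ v in (0:ℝ)..b, L (p ^ (k+1) * B.comp (v • p + ContinuousMap.const K h)) = 0 := by
    intro b
    rw [← L_integral L (fun v => p ^ (k+1) * B.comp (v • p + ContinuousMap.const K h))
      (cont_curve p (k+1) B (fun v => v) (fun _ => h) continuous_id continuous_const)
      (p ^ k * A.comp (b • p + ContinuousMap.const K h)
        - p ^ k * A.comp ((0:ℝ) • p + ContinuousMap.const K h)) 0 b]
    · rw [map_sub, hQA, hQA, sub_zero]
    · intro y
      have hd : ∀ v ∈ Set.uIcc (0:ℝ) b, HasDerivAt (fun v => p y ^ k * A (v * p y + h))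
          (p y ^ (k+1) * B (v * p y + h)) v := by
        intro v _
        have h1 : HasDerivAt (fun v => v * p y + h) (1 * p y) v :=
          ((hasDerivAt_id v).mul_const _).add_const _
        have h2 := ((hA (v * p y + h)).comp v h1).const_mul (p y ^ k)
        have h3 : p y ^ (k+1) * B (v * p y + h) = p y ^ k * (B (v * p y + h) * (1 * p y)) := by
          ring
        rw [h3]
        exact h2
      have := intervalIntegral.integral_eq_sub_of_hasDerivAt hd
        (by apply Continuous.intervalIntegrable; fun_prop)
      simpa using this.symm
  have h1 := intervalIntegral.integral_hasDerivAt_right (hc.intervalIntegrable 0 a)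
      hc.stronglyMeasurable.stronglyMeasurableAtFilter hc.continuousAt
  rw [funext hz] at h1
  exact h1.unique (hasDerivAt_const _ _)

lemma QQ_main (L : C(K, ℝ) →L[ℝ] ℝ) (p : C(K, ℝ)) (k : ℕ) : ∀ (j : ℕ) (g : C(ℝ, ℝ)),
    QQ L p j g → L (p ^ (j + k)) ≠ 0 → DiffZero k g := by
  induction k with
  | zero =>
    intro j g hQ hne x
    have := hQ 0 x
    have h2 : p ^ j * g.comp ((0:ℝ) • p + ContinuousMap.const K x) = g x • p ^ j := by
      ext y; simp [mul_comm]
    rw [h2, map_smul] at this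
    have h3 : L (p ^ j) ≠ 0 := hne
    simpa [h3] using this
  | succ k ih =>
    intro j g hQ hne δ
    let B : C(ℝ, ℝ) := ⟨fun x => g (x + δ) - g x, by fun_prop⟩
    exact ih (j+1) B (QQ_step L p j g B δ (fun _ => rfl) hQ)
      (by rwa [show j + 1 + k = j + (k + 1) by ring])
end

lemma closure_span_top {E : Type*} [NormedAddCommGroup E] [NormedSpace ℝ E] (S : Submodule ℝ E)
    (h : ∀ L : E →L[ℝ] ℝ, (∀ x ∈ S, L x = 0) → L = 0) : Dense (S : Set E) := by
  intro x
  by_contra hx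
  have hx' : x ∉ (S.topologicalClosure : Set E) := by
    rwa [Submodule.topologicalClosure_coe]
  obtain ⟨L, u, h1, h2⟩ := geometric_hahn_banach_point_closed
    (S.topologicalClosure.convex) S.isClosed_topologicalClosure hx'
  have hu : u < 0 := by simpa using h2 0 (Submodule.zero_mem _)
  have hL : ∀ y ∈ S, L y = 0 := by
    intro y hy
    by_contra hne
    have := h2 ((u / L y) • y) (Submodule.smul_mem _ _ (S.le_topologicalClosure hy))
    rw [map_smul, smul_eq_mul, div_mul_cancel₀ _ hne] at this
    exact lt_irrefl _ this
  rw [h L hL] at h1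
  simp at h1
  linarith

def netSpan (σ : C(ℝ, ℝ)) (s : Set ℝ) : Submodule ℝ C(s, ℝ) :=
  Submodule.span ℝ (Set.range fun q : ℝ × ℝ =>
    σ.comp (q.1 • (⟨Subtype.val, continuous_subtype_val⟩ : C(s, ℝ)) + ContinuousMap.const s q.2))

lemma netSpan_dense (σ : C(ℝ, ℝ))
    (hσp : ¬ ∃ p : Polynomial ℝ, ∀ t : ℝ, σ t = Polynomial.eval t p)
    (s : Set ℝ) [CompactSpace s] : Dense (netSpan σ s : Set C(s, ℝ)) := by
  apply closure_span_top
  intro L hL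
  set p : C(s, ℝ) := ⟨Subtype.val, continuous_subtype_val⟩ with hp
  have hk : ∀ k, L (p ^ k) = 0 := by
    intro k
    by_contra hne
    apply hσp
    refine diffZero_poly k σ σ.continuous (QQ_main L p k 0 σ ?_ (by simpa using hne))
    intro a h
    rw [pow_zero, one_mul]
    exact hL _ (Submodule.subset_span ⟨(a, h), rfl⟩)
  have hpoly : ∀ q : Polynomial ℝ, L (q.toContinuousMapOn s) = 0 := by
    intro q
    induction q using Polynomial.induction_on' with
    | add a b ha hb =>
      have : (a + b).toContinuousMapOn s = a.toContinuousMapOn s + b.toContinuousMapOn s := by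
        ext; simp
      rw [this, map_add, ha, hb, add_zero]
    | monomial n a =>
      have : (Polynomial.monomial n a).toContinuousMapOn s = a • p ^ n := by
        ext; simp [hp]
      rw [this, map_smul, hk, smul_zero]
  have hd : Dense (polynomialFunctions s : Set C(s, ℝ)) := by
    rw [dense_iff_closure_eq, ← Subalgebra.topologicalClosure_coe,
      polynomialFunctions.topologicalClosure s]
    rfl
  have : (L : C(s, ℝ) → ℝ) = fun _ => 0 := by
    refine Continuous.ext_on hd L.continuous continuous_const ?_
    intro g hg
    rw [SetLike.mem_coe, ← SetLike.mem_coe, polynomialFunctions_coe] at hg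
    obtain ⟨q, rfl⟩ := hg
    exact hpoly q
  ext g
  exact congrFun this g

lemma mem_netSpan (σ : C(ℝ, ℝ)) (s : Set ℝ) (g : C(s, ℝ)) (hg : g ∈ netSpan σ s) :
    ∃ (N : ℕ) (c w h : Fin N → ℝ), ∀ t : s, g t = ∑ i, c i * σ (w i * t + h i) := by
  obtain ⟨N, c, q, rfl⟩ := (Submodule.mem_span_set').1 hg
  choose q' hq' using fun i => (q i).2
  refine ⟨N, c, fun i => (q' i).1, fun i => (q' i).2, fun t => ?_⟩
  rw [ContinuousMap.sum_apply]
  refine Finset.sum_congr rfl fun i _ => ?_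
  rw [← hq' i]
  simp

lemma exists_poly {n : ℕ} (V : Set (Fin n → ℝ)) (hVc : IsCompact V)
    (f : (Fin n → ℝ) → ℝ) (hf : ContinuousOn f V) (ε : ℝ) (hε : 0 < ε) :
    ∃ P : MvPolynomial (Fin n) ℝ, ∀ x ∈ V, |f x - MvPolynomial.eval x P| < ε := by
  have : CompactSpace V := isCompact_iff_compactSpace.1 hVc
  let X : Fin n → C(V, ℝ) := fun i => ⟨fun x => x.1 i, (continuous_apply i).comp continuous_subtype_val⟩
  let A : Subalgebra ℝ C(V, ℝ) := (MvPolynomial.aeval X : MvPolynomial (Fin n) ℝ →ₐ[ℝ] C(V, ℝ)).range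
  have hA : A.SeparatesPoints := by
    intro x y hxy
    have : ∃ i, x.1 i ≠ y.1 i := by
      by_contra! h
      exact hxy (Subtype.ext (funext h))
    obtain ⟨i, hi⟩ := this
    exact ⟨X i, ⟨X i, ⟨MvPolynomial.X i, by simp⟩, rfl⟩, hi⟩
  obtain ⟨⟨_, P, rfl⟩, hP⟩ := ContinuousMap.exists_mem_subalgebra_near_continuous_of_separatesPoints
    A hA (fun x : V => f x) (continuousOn_iff_continuous_restrict.1 hf) ε hε
  refine ⟨P, fun x hx => ?_⟩
  have h1 := hP ⟨x, hx⟩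
  rw [Real.norm_eq_abs, abs_sub_comm] at h1
  have h2 : (MvPolynomial.aeval X P : C(V, ℝ)) ⟨x, hx⟩ = MvPolynomial.eval x P := by
    have : ((ContinuousMap.evalAlgHom ℝ ℝ (⟨x, hx⟩ : V)).comp (MvPolynomial.aeval X)) P
       = MvPolynomial.aeval x P := by
      congr 1
      ext i
      simp [X]
    simpa [MvPolynomial.aeval_eq_eval] using this
  simpa [h2] using h1

lemma sym_poly {n : ℕ} (G : Subgroup (Equiv.Perm (Fin n))) [Fintype G]
    (V : Set (Fin n → ℝ)) (hVc : IsCompact V)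
    (hVstable : ∀ g ∈ G, ∀ x ∈ V, (fun i => x (g i)) ∈ V)
    (f : (Fin n → ℝ) → ℝ) (hf : ContinuousOn f V)
    (hfinv : ∀ g ∈ G, ∀ x ∈ V, f (fun i => x (g i)) = f x)
    (ε : ℝ) (hε : 0 < ε) :
    ∃ (m : ℕ) (c : Fin m → ℝ) (α : Fin m → Fin n → ℕ), ∀ x ∈ V,
      |f x - ∑ k, c k * ∑ g : G, ∏ j, x ((g : Equiv.Perm (Fin n)) j) ^ α k j| < ε := by
  obtain ⟨P, hP⟩ := exists_poly V hVc f hf ε hε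
  let e := P.support.equivFin
  refine ⟨P.support.card, fun k => (Fintype.card G : ℝ)⁻¹ * P.coeff (e.symm k).1,
    fun k j => (e.symm k).1 j, fun x hx => ?_⟩
  have hG : (0:ℝ) < Fintype.card G := by exact_mod_cast Fintype.card_pos
  have h1 : ∑ k, ((Fintype.card G : ℝ)⁻¹ * P.coeff (e.symm k).1) *
      ∑ g : G, ∏ j, x ((g : Equiv.Perm (Fin n)) j) ^ (e.symm k).1 j =
      (Fintype.card G : ℝ)⁻¹ * ∑ g : G, MvPolynomial.eval (fun i => x (g.1 i)) P := by
    rw [e.symm.sum_comp (fun a : P.support => ((Fintype.card G : ℝ)⁻¹ * P.coeff a.1) *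
      ∑ g : G, ∏ j, x ((g : Equiv.Perm (Fin n)) j) ^ a.1 j)]
    simp only [MvPolynomial.eval_eq', mul_assoc]
    rw [← Finset.mul_sum, Finset.sum_comm]
    congr 1
    simp only [Finset.mul_sum]
    exact Finset.sum_coe_sort P.support (fun a => ∑ g : G, P.coeff a * ∏ j, x (g.1 j) ^ a j)
  rw [h1]
  have h2 : f x - (Fintype.card G : ℝ)⁻¹ * ∑ g : G, MvPolynomial.eval (fun i => x (g.1 i)) P =
      (Fintype.card G : ℝ)⁻¹ * ∑ g : G, (f (fun i => x (g.1 i)) -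
        MvPolynomial.eval (fun i => x (g.1 i)) P) := by
    rw [Finset.sum_sub_distrib, Finset.sum_congr rfl (fun (g : G) _ => hfinv g.1 g.2 x hx :
      ∀ g ∈ Finset.univ, f (fun i => x (g.1 i)) = f x)]
    simp
    field_simp
  rw [h2, abs_mul, abs_of_pos (inv_pos.2 hG), inv_mul_lt_iff₀ hG]
  calc _ ≤ ∑ g : G, |f (fun i => x (g.1 i)) - MvPolynomial.eval (fun i => x (g.1 i)) P| :=
        Finset.abs_sum_le_sum_abs _ _
    _ < ∑ g : G, ε := Finset.sum_lt_sum_of_nonempty Finset.univ_nonempty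
        fun g _ => hP _ (hVstable g.1 g.2 x hx)
    _ = _ := by simp

lemma merge_net (σ : ℝ → ℝ) (m : ℕ) (φ : ℝ → Fin m → ℝ)
    (h : ∀ k, ∃ (N : ℕ) (c w h : Fin N → ℝ), ∀ t, φ t k = ∑ i, c i * σ (w i * t + h i)) :
    ∃ (N : ℕ) (c : Fin N → Fin m → ℝ) (w h : Fin N → ℝ),
        ∀ (t : ℝ) (k : Fin m), φ t k = ∑ i : Fin N, c i k * σ (w i * t + h i) := by
  choose N c w b hh using h
  let e := Fintype.equivFin (Σ k, Fin (N k))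
  refine ⟨_, fun i k => if (e.symm i).1 = k then c _ (e.symm i).2 else 0,
    fun i => w _ (e.symm i).2, fun i => b _ (e.symm i).2, fun t k => ?_⟩
  rw [e.symm.sum_comp (fun z => (if z.1 = k then c _ z.2 else 0) * σ (w _ z.2 * t + b _ z.2)),
    Fintype.sum_sigma, hh, Finset.sum_eq_single k]
  · simp
  · intro l _ hl
    simp [hl]
  · simp

theorem G_invariant_network_universal
    (σ : ℝ → ℝ) (hσc : Continuous σ)
    (hσp : ¬ ∃ p : Polynomial ℝ, ∀ t : ℝ, σ t = Polynomial.eval t p)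
    (n : ℕ) (hn : 1 ≤ n)
    (G : Subgroup (Equiv.Perm (Fin n))) [Fintype G]
    (V : Set (Fin n → ℝ)) (hVc : IsCompact V)
    (hVsub : V ⊆ Set.Icc (0 : Fin n → ℝ) 1)
    (hVstable : ∀ g ∈ G, ∀ x ∈ V, (fun i => x (g i)) ∈ V)
    (f : (Fin n → ℝ) → ℝ) (hf : ContinuousOn f V)
    (hfinv : ∀ g ∈ G, ∀ x ∈ V, f (fun i => x (g i)) = f x)
    (ε : ℝ) (hε : 0 < ε) :
    ∃ (nmid : ℕ) (φ : Fin n → ℝ → (Fin nmid → ℝ)) (fout : (Fin nmid → ℝ) → ℝ),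
      (∀ j : Fin n, ∃ (N : ℕ) (c : Fin N → Fin nmid → ℝ) (w h : Fin N → ℝ),
        ∀ (t : ℝ) (k : Fin nmid), φ j t k = ∑ i : Fin N, c i k * σ (w i * t + h i)) ∧
      (∃ (N : ℕ) (c : Fin N → ℝ) (w : Fin N → Fin nmid → ℝ) (h : Fin N → ℝ),
        ∀ y : Fin nmid → ℝ,
          fout y = ∑ i : Fin N, c i * σ ((∑ j : Fin nmid, w i j * y j) + h i)) ∧
      (∀ x ∈ V,
        |f x - fout (∑ g : G, ∏ j : Fin n, φ j (x ((g : Equiv.Perm (Fin n)) j)))| < ε) := by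
  have : CompactSpace V := isCompact_iff_compactSpace.1 hVc
  let S : C(ℝ, ℝ) := ⟨σ, hσc⟩
  obtain ⟨m, c, α, hα⟩ := sym_poly G V hVc hVstable f hf hfinv (ε / 3) (by positivity)
  let I : Set ℝ := Set.Icc 0 1
  let ev : Fin n → C(V, I) := fun i =>
    ⟨fun x => ⟨x.1 i, (hVsub x.2).1 i, (hVsub x.2).2 i⟩,
      ((continuous_apply i).comp continuous_subtype_val).subtype_mk _⟩
  let T : (Fin n → Fin m → C(I, ℝ)) → C(V, ℝ) := fun Φ =>
    ∑ k, c k • ∑ g : G, ∏ j, (Φ j k).comp (ev (g.1 j))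
  have hT : Continuous T := by
    refine continuous_finsetSum _ fun k _ => (continuous_const_smul (c k)).comp
      (continuous_finsetSum _ fun g _ => continuous_finsetProd _ fun j _ => ?_)
    exact (ContinuousMap.continuous_precomp (ev (g.1 j))).comp
      ((continuous_apply k).comp (continuous_apply j))
  let Φ₀ : Fin n → Fin m → C(I, ℝ) := fun j k => ⟨fun t => t.1 ^ α k j, by fun_prop⟩
  have hD : Dense (Set.pi Set.univ fun _ : Fin n => Set.pi Set.univ fun _ : Fin m =>
      (netSpan S I : Set C(I, ℝ))) :=
    dense_pi _ fun _ _ => dense_pi _ fun _ _ => netSpan_dense S hσp I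
  obtain ⟨Φ, hΦ1, hΦ2⟩ := hD.inter_open_nonempty _
    (Metric.isOpen_ball.preimage hT : IsOpen (T ⁻¹' Metric.ball (T Φ₀) (ε / 3)))
    ⟨Φ₀, by simpa using (by positivity : 0 < ε / 3)⟩
  have hT1 : ∀ (Ψ : Fin n → Fin m → C(I, ℝ)) (x : V),
      T Ψ x = ∑ k, c k * ∑ g : G, ∏ j, Ψ j k (ev (g.1 j) x) := by
    intro Ψ x
    simp [T, ContinuousMap.sum_apply, ContinuousMap.prod_apply]
  choose N a w b hab using fun j k => mem_netSpan S I (Φ j k) (hΦ2 j trivial k trivial)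
  let φ : Fin n → ℝ → Fin m → ℝ := fun j t k => ∑ i, a j k i * σ (w j k i * t + b j k i)
  let s : Set ℝ := Set.range (T Φ)
  have : CompactSpace s := isCompact_iff_compactSpace.1 (isCompact_range (T Φ).continuous)
  obtain ⟨η, hη1, hη2⟩ := (netSpan_dense S hσp s).exists_dist_lt
    (⟨Subtype.val, continuous_subtype_val⟩ : C(s, ℝ)) (show 0 < ε / 3 by positivity)
  obtain ⟨M, a', w', b', hM⟩ := mem_netSpan S s η hη1
  refine ⟨m, φ, fun y => ∑ i, a' i * σ ((∑ k, (w' i * c k) * y k) + b' i),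
    fun j => merge_net σ m (φ j) fun k => ⟨_, _, _, _, fun t => rfl⟩,
    ⟨M, a', fun i k => w' i * c k, b', fun y => rfl⟩, fun x hx => ?_⟩
  have e1 : ∑ k, c k * (∑ g : G, ∏ j, φ j (x (g.1 j))) k = T Φ ⟨x, hx⟩ := by
    rw [hT1]
    refine Finset.sum_congr rfl fun k _ => ?_
    rw [Finset.sum_apply]
    congr 1
    refine Finset.sum_congr rfl fun g _ => ?_
    rw [Finset.prod_apply]
    refine Finset.prod_congr rfl fun j _ => ?_
    rw [hab]
    rfl
  have e2 : ∑ i, a' i * σ ((∑ k, (w' i * c k) * (∑ g : G, ∏ j, φ j (x (g.1 j))) k) + b' i)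
      = η ⟨T Φ ⟨x, hx⟩, ⟨_, rfl⟩⟩ := by
    rw [hM]
    simp only [mul_assoc, ← Finset.mul_sum, e1]
    rfl
  have h1 := hα x hx
  have h2 : |T Φ ⟨x, hx⟩ - T Φ₀ ⟨x, hx⟩| < ε / 3 :=
    lt_of_le_of_lt ((T Φ).dist_apply_le_dist ⟨x, hx⟩) hΦ1
  have h3 : |T Φ ⟨x, hx⟩ - η ⟨T Φ ⟨x, hx⟩, ⟨_, rfl⟩⟩| < ε / 3 :=
    lt_of_le_of_lt (ContinuousMap.dist_apply_le_dist
      (f := (⟨Subtype.val, continuous_subtype_val⟩ : C(s, ℝ))) (g := η)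
      ⟨T Φ ⟨x, hx⟩, ⟨_, rfl⟩⟩) hη2
  have h4 : T Φ₀ ⟨x, hx⟩ = ∑ k, c k * ∑ g : G, ∏ j, x ((g : Equiv.Perm (Fin n)) j) ^ α k j :=
    hT1 Φ₀ ⟨x, hx⟩
  rw [← h4] at h1
  show |f x - ∑ i, a' i * σ ((∑ k, (w' i * c k) * (∑ g : G, ∏ j, φ j (x (g.1 j))) k) + b' i)| < ε
  rw [e2]
  rw [abs_lt] at *
  constructor <;> linarith [h1.1, h1.2, h2.1, h2.2, h3.1, h3.2]
end
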